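/- arXiv:1603.01078 — 4 statements merged into one kernel-verified Lean document; each statement's English description precedes it below -/
import Mathlib

section
/- Let S be a numerical semigroup minimally generated by n_1 < … < n_d, let k be a field, let s ∈ S and let c be a factorization of s. Then there exists a minimal generating set E of the toric ideal I_S consisting of binomials such that every binomial x^a − x^b ∈ E with s(a) ∉ AP(S,s) has one of its two monomials divisible by x^c. -/
open scoped BigOperators

/-- The value `Σ aᵢ nᵢ` of a tuple of coefficients `a` w.r.t. the generators `n`. -/
def sval {d : ℕ} (n : Fin d → ℕ) (a : Fin d → ℕ) : ℕ := ∑ i, a i * n i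

/-- The total length `Σ aᵢ` of a factorization. -/
def tlen {d : ℕ} (a : Fin d → ℕ) : ℕ := ∑ i, a i

/-- The submonoid of `ℕ` generated by `n`. -/
def gen {d : ℕ} (n : Fin d → ℕ) : Set ℕ := {s : ℕ | ∃ a : Fin d → ℕ, s = sval n a}

/-- The Apéry set of the semigroup generated by `n` with respect to `s`:
elements `x` of the semigroup such that `x - s` is not in the semigroup. -/
def Apery {d : ℕ} (n : Fin d → ℕ) (s : ℕ) : Set ℕ :=
  {x : ℕ | x ∈ gen n ∧ ¬ ∃ y ∈ gen n, x = s + y}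

/-- A subset `T` is homogeneous if every nonzero element of `T` has all its
factorizations of the same length. -/
def HomogSet {d : ℕ} (n : Fin d → ℕ) (T : Set ℕ) : Prop :=
  ∀ t ∈ T, t ≠ 0 → ∀ a b : Fin d → ℕ, sval n a = t → sval n b = t → tlen a = tlen b

/-- The order of `s`: the maximal length of a factorization of `s`. -/
noncomputable def ordS {d : ℕ} (n : Fin d → ℕ) (s : ℕ) : ℕ :=
  sSup {l : ℕ | ∃ a : Fin d → ℕ, sval n a = s ∧ tlen a = l}

/-- The torsion set of the semigroup generated by `n`, with respect to the
generator of index `i0` (the smallest generator). -/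
noncomputable def Torsion {d : ℕ} (n : Fin d → ℕ) (i0 : Fin d) : Set ℕ :=
  {s : ℕ | s ∈ gen n ∧ ∃ c : ℕ, 0 < c ∧ ordS n s + c < ordS n (s + c * n i0)}

/-- `n` is a minimal system of generators: any expression of a generator as a
nonnegative combination of the generators has total coefficient sum one. -/
def MinGen {d : ℕ} (n : Fin d → ℕ) : Prop :=
  ∀ r : Fin d, ∀ a : Fin d → ℕ, n r = sval n a → tlen a = 1

/-- `n` generates a numerical semigroup (cofinite in `ℕ`). -/
def IsNumerical {d : ℕ} (n : Fin d → ℕ) : Prop := {x : ℕ | x ∉ gen n}.Finite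

/-- The monomial `x^a = Π xᵢ^{aᵢ}`. -/
noncomputable def monom (k : Type*) [CommRing k] {d : ℕ} (a : Fin d → ℕ) :
    MvPolynomial (Fin d) k :=
  ∏ i, (MvPolynomial.X i : MvPolynomial (Fin d) k) ^ a i

/-- The toric ideal `I_S`: kernel of `k[x₁,…,x_d] → k[t]`, `xᵢ ↦ t^{nᵢ}`. -/
noncomputable def toricIdeal (k : Type*) [CommRing k] {d : ℕ} (n : Fin d → ℕ) :
    Ideal (MvPolynomial (Fin d) k) :=
  RingHom.ker (MvPolynomial.aeval (R := k)
    (fun i => (Polynomial.X : Polynomial k) ^ n i)).toRingHom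

/-- `E` is a minimal generating set of the ideal `I`: it spans `I` and no
proper subset spans `I`. -/
def IsMinGenSet {R : Type*} [CommRing R] (I : Ideal R) (E : Set R) : Prop :=
  Ideal.span E = I ∧ ∀ E' : Set R, E' ⊂ E → Ideal.span E' ≠ I

/-- Membership of an integer in the semigroup generated by `n`. -/
def memZ {d : ℕ} (n : Fin d → ℕ) (z : ℤ) : Prop := ∃ x ∈ gen n, (x : ℤ) = z

/-- A numerical semigroup with Frobenius number `F = max (ℤ ∖ S)` is symmetric
if for every integer `z`, `z ∈ S ↔ F - z ∉ S`. -/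
def IsSymmetric {d : ℕ} (n : Fin d → ℕ) : Prop :=
  ∃ F : ℤ, ¬ memZ n F ∧ (∀ z : ℤ, F < z → memZ n z) ∧
    ∀ z : ℤ, memZ n z ↔ ¬ memZ n (F - z)

/-- A numerical semigroup with Frobenius number `F = max (ℤ ∖ S)` is
pseudo-symmetric if `F` is even and for every integer `z`,
`z ∈ S ↔ (z ≠ F/2 ∧ F - z ∉ S)`. -/
def IsPseudoSymmetric {d : ℕ} (n : Fin d → ℕ) : Prop :=
  ∃ F : ℤ, ¬ memZ n F ∧ (∀ z : ℤ, F < z → memZ n z) ∧ F % 2 = 0 ∧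
    ∀ z : ℤ, memZ n z ↔ (z ≠ F / 2 ∧ ¬ memZ n (F - z))

/-- The generators `q·m₁,…,q·m_d, p·n₁,…,p·n_e` of the gluing of two numerical
semigroups. -/
def glueGen {d e : ℕ} (mg : Fin d → ℕ) (ng : Fin e → ℕ) (p q : ℕ) :
    Fin (d + e) → ℕ :=
  Fin.append (fun i => q * mg i) (fun i => p * ng i)
theorem monom_eq_mono (k : Type*) [CommRing k] {d : ℕ} (a : Fin d → ℕ) :
    monom k a = MvPolynomial.monomial (Finsupp.equivFunOnFinite.symm a) 1 := by
  rw [MvPolynomial.monomial_eq, Finsupp.prod_fintype _ _ (by simp)]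
  simp [monom]

theorem monom_dvd_of_le (k : Type*) [CommRing k] {d : ℕ} {c a : Fin d → ℕ} (h : c ≤ a) :
    monom k c ∣ monom k a :=
  Finset.prod_dvd_prod_of_dvd _ _ (fun i _ => pow_dvd_pow _ (h i))

theorem monom_coeff (k : Type*) [CommRing k] {d : ℕ} (a b : Fin d → ℕ) :
    MvPolynomial.coeff (Finsupp.equivFunOnFinite.symm b) (monom k a) = if a = b then 1 else 0 := by
  classical
  rw [monom_eq_mono, MvPolynomial.coeff_monomial]
  simp

theorem binom_inj (k : Type*) [Field k] {d : ℕ} {a b a' b' : Fin d → ℕ} (hne : a' ≠ b')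
    (h : monom k a - monom k b = monom k a' - monom k b') :
    (a = a' ∧ b = b') ∨ (a = b' ∧ b = a') := by
  have H : ∀ e : Fin d → ℕ, ((if a = e then 1 else 0) - (if b = e then 1 else 0) : k)
      = (if a' = e then 1 else 0) - (if b' = e then 1 else 0) := by
    intro e
    have := congrArg (MvPolynomial.coeff (Finsupp.equivFunOnFinite.symm e)) h
    simpa only [MvPolynomial.coeff_sub, monom_coeff] using this
  have h1 := H a'
  have h2 := H b'
  rw [if_pos rfl, if_neg hne.symm] at h1
  rw [if_pos rfl, if_neg hne] at h2
  by_cases haa : a = a'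
  · left
    refine ⟨haa, ?_⟩
    by_contra hbb
    rw [if_neg hbb, if_neg (haa ▸ hne)] at h2
    simp at h2
  · right
    rw [if_neg haa] at h1
    have hb : b = a' := by
      by_contra hb
      rw [if_neg hb] at h1
      simp at h1
    refine ⟨?_, hb⟩
    by_contra hab
    rw [if_neg hab, if_neg (hb ▸ hne)] at h2
    simp at h2

theorem aeval_monom (k : Type*) [CommRing k] {d : ℕ} (n a : Fin d → ℕ) :
    MvPolynomial.aeval (R := k) (fun i => (Polynomial.X : Polynomial k) ^ n i) (monom k a)
      = Polynomial.monomial (sval n a) 1 := by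
  simp only [monom, sval, map_prod, map_pow, MvPolynomial.aeval_X]
  rw [← Polynomial.X_pow_eq_monomial, ← Finset.prod_pow_eq_pow_sum]
  refine Finset.prod_congr rfl fun i _ => ?_
  rw [← pow_mul, mul_comm]

theorem sval_add {d : ℕ} (n a b : Fin d → ℕ) : sval n (a + b) = sval n a + sval n b := by
  simp [sval, add_mul, Finset.sum_add_distrib]

/-- The binomials allowed in the generating set. -/
def goodBinom (k : Type*) [CommRing k] {d : ℕ} (n : Fin d → ℕ) (s : ℕ) (c : Fin d → ℕ) :
    Set (MvPolynomial (Fin d) k) :=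
  {f | ∃ a b : Fin d → ℕ, f = monom k a - monom k b ∧ sval n a = sval n b ∧
    (sval n a ∉ Apery n s → c ≤ a ∨ c ≤ b)}

theorem exists_repr {d : ℕ} (n : Fin d → ℕ) (s : ℕ) (c : Fin d → ℕ) (hc : sval n c = s) (m : ℕ) :
    ∃ r : Fin d → ℕ, m ∈ gen n → sval n r = m ∧ (m ∉ Apery n s → c ≤ r) := by
  by_cases hm : m ∈ gen n
  · by_cases hA : m ∈ Apery n s
    · obtain ⟨r, hr⟩ := hm
      exact ⟨r, fun _ => ⟨hr.symm, fun h => absurd hA h⟩⟩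
    · have : ∃ y ∈ gen n, m = s + y := by
        by_contra h
        exact hA ⟨hm, h⟩
      obtain ⟨y, ⟨e, he⟩, hy⟩ := this
      refine ⟨c + e, fun _ => ⟨by rw [sval_add, hc, ← he, hy], fun _ => ?_⟩⟩
      exact le_self_add
  · exact ⟨0, fun h => absurd h hm⟩

theorem span_goodBinom (k : Type*) [Field k] {d : ℕ} (n : Fin d → ℕ) (s : ℕ) (c : Fin d → ℕ)
    (hc : sval n c = s) : Ideal.span (goodBinom k n s c) = toricIdeal k n := by
  apply le_antisymm
  · rw [Ideal.span_le]
    rintro f ⟨a, b, rfl, hab, -⟩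
    change MvPolynomial.aeval (R := k) (fun i => (Polynomial.X : Polynomial k) ^ n i) _ = 0
    rw [map_sub, aeval_monom, aeval_monom, hab, sub_self]
  · intro f hf
    choose r hr using exists_repr n s c hc
    let ψ : Polynomial k →ₗ[k] MvPolynomial (Fin d) k :=
      (Polynomial.basisMonomials k).constr k (fun m => monom k (r m))
    have hψ : ∀ m, ψ (Polynomial.monomial m 1) = monom k (r m) := by
      intro m
      have := (Polynomial.basisMonomials k).constr_basis k (fun m => monom k (r m)) m
      simpa [ψ] using this
    have key : ∀ g : MvPolynomial (Fin d) k, g - ψ (MvPolynomial.aeval (R := k)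
        (fun i => (Polynomial.X : Polynomial k) ^ n i) g) ∈ Ideal.span (goodBinom k n s c) := by
      intro g
      induction g using MvPolynomial.induction_on' with
      | monomial u t =>
        have hu : MvPolynomial.monomial u t = t • monom k (fun i => u i) := by
          rw [monom_eq_mono, MvPolynomial.smul_monomial, smul_eq_mul, mul_one]
          have hv : (Finsupp.equivFunOnFinite.symm fun i => u i) = u := by
            ext i
            rfl
          rw [hv]
        rw [hu, map_smul, map_smul, aeval_monom, hψ, ← smul_sub, MvPolynomial.smul_eq_C_mul]
        apply Ideal.mul_mem_left
        apply Ideal.subset_span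
        obtain ⟨h1, h2⟩ := hr (sval n fun i => u i) ⟨_, rfl⟩
        exact ⟨_, _, rfl, h1.symm, fun h => Or.inr (h2 h)⟩
      | add p q hp hq =>
        rw [map_add, map_add, add_sub_add_comm]
        exact Ideal.add_mem _ hp hq
    have h0 : MvPolynomial.aeval (R := k)
        (fun i => (Polynomial.X : Polynomial k) ^ n i) f = 0 := hf
    have := key f
    rwa [h0, map_zero, sub_zero] at this

theorem exists_min_subset {R : Type*} [CommRing R] [IsNoetherianRing R] (G : Set R) :
    ∃ E ⊆ G, IsMinGenSet (Ideal.span G) E := by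
  obtain ⟨T, hTG, hT⟩ := (Submodule.fg_span_iff_fg_span_finset_subset (R := R) G).1
    (IsNoetherian.noetherian _)
  obtain ⟨M, hMT, hM⟩ := exists_minimal_le_of_wellFoundedLT
    (fun F : Finset R => Ideal.span (F : Set R) = Ideal.span G) T hT.symm
  refine ⟨M, (Finset.coe_subset.2 hMT).trans hTG, hM.prop, fun E' hE' h => ?_⟩
  have hfin : E'.Finite := M.finite_toSet.subset hE'.1
  have hle : hfin.toFinset ≤ M := by
    intro x hx
    exact hE'.1 (hfin.mem_toFinset.1 hx)
  have := hM.le_of_le (y := hfin.toFinset) (by simpa using h) hle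
  exact hE'.2 fun x hx => hfin.mem_toFinset.1 (this hx)

/-- given a factorization `c` of `s`, there is a minimal binomial
generating set of `I_S` in which every binomial `x^a - x^b` with
`s(a) ∉ AP(S,s)` has one of its monomials divisible by `x^c`. -/
theorem statement1 {d : ℕ} (hd : 0 < d) (k : Type*) [Field k]
    (n : Fin d → ℕ) (hmono : StrictMono n) (hpos : 0 < n ⟨0, hd⟩)
    (hnum : IsNumerical n) (hmin : MinGen n)
    (s : ℕ) (hs : s ∈ gen n) (c : Fin d → ℕ) (hc : sval n c = s) :
    ∃ E : Set (MvPolynomial (Fin d) k),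
      IsMinGenSet (toricIdeal k n) E ∧
      (∀ f ∈ E, ∃ a b : Fin d → ℕ, f = monom k a - monom k b) ∧
      (∀ a b : Fin d → ℕ, monom k a - monom k b ∈ E → sval n a ∉ Apery n s →
        (monom k c ∣ monom k a ∨ monom k c ∣ monom k b)) := by
  obtain ⟨E, hEG, hE⟩ := exists_min_subset (goodBinom k n s c)
  rw [span_goodBinom k n s c hc] at hE
  refine ⟨E, hE, fun f hf => ?_, fun a b hab hA => ?_⟩
  · obtain ⟨a, b, h, -⟩ := hEG hf
    exact ⟨a, b, h⟩
  · obtain ⟨a', b', h, hs', hg⟩ := hEG hab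
    have hne : a' ≠ b' := by
      rintro rfl
      rw [sub_self] at h
      rw [h] at hab
      refine hE.2 (E \ {0}) ⟨Set.sdiff_subset, fun hh => (hh hab).2 rfl⟩ ?_
      rw [Ideal.span_sdiff_singleton_zero, hE.1]
    rcases binom_inj k hne h with ⟨rfl, rfl⟩ | ⟨rfl, rfl⟩
    · exact (hg hA).imp (monom_dvd_of_le k) (monom_dvd_of_le k)
    · rw [hs'] at hg
      exact ((hg hA).imp (monom_dvd_of_le k) (monom_dvd_of_le k)).symm
end

section
/- Let b > a > 3 be coprime integers and let H = ⟨a, b, ab − a − b⟩ be the Frobenius semigroup, minimally generated by a, b and ab − a − b. Then AP(H,a) = {0, b, 2b, …, (a−2)b, ab − a − b}, this set is homogeneous (so H is homogeneous), and the torsion set of H is T(H) = {ab − a − b}; in particular the tangent cone of H is not Cohen–Macaulay. -/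
open scoped BigOperators

section Helpers
variable {a b f : ℕ}

theorem fr_sval (c : Fin 3 → ℕ) : sval ![a, b, f] c = c 0 * a + c 1 * b + c 2 * f := by
  simp [sval, Fin.sum_univ_three]

theorem fr_tlen (c : Fin 3 → ℕ) : tlen c = c 0 + c 1 + c 2 := by
  simp [tlen, Fin.sum_univ_three]

theorem fr_gen (s : ℕ) : s ∈ gen ![a, b, f] ↔ ∃ x y z : ℕ, s = x * a + y * b + z * f := by
  constructor
  · rintro ⟨c, hc⟩
    exact ⟨c 0, c 1, c 2, by rw [hc, fr_sval]⟩
  · rintro ⟨x, y, z, h⟩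
    exact ⟨![x, y, z], by rw [fr_sval]; simpa using h⟩

/-- `i * b` with `i ≤ a - 2` is not in `a + H`. -/
theorem fr_ap1 (ha : 3 < a) (hab : a < b) (hcop : Nat.Coprime a b) (hf : f + a + b = a * b)
    (i x y z : ℕ) (hi : i + 2 ≤ a) (h : i * b = a + (x * a + y * b + z * f)) : False := by
  have hib : (i + 2) * b ≤ a * b := Nat.mul_le_mul_right b hi
  rcases Nat.eq_zero_or_pos z with hz | hz
  · subst hz
    have hlt : y < i := by
      by_contra hc
      have := Nat.mul_le_mul_right b (not_lt.mp hc)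
      omega
    obtain ⟨k, rfl⟩ := Nat.exists_eq_add_of_lt hlt
    have h2 : (k + 1) * b = a * (x + 1) := by nlinarith
    have h3 : a ∣ (k + 1) := hcop.dvd_of_dvd_mul_right ⟨_, h2⟩
    have := Nat.le_of_dvd (by omega) h3
    omega
  · have := Nat.mul_le_mul_right f hz
    nlinarith

/-- `f` is not in `a + H`. -/
theorem fr_ap2 (ha : 3 < a) (hcop : Nat.Coprime a b) (hf : f + a + b = a * b)
    (x y z : ℕ) (h : f = a + (x * a + y * b + z * f)) : False := by
  rcases Nat.eq_zero_or_pos z with hz | hz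
  · subst hz
    have h2 : a * b = a * (x + 2) + (y + 1) * b := by nlinarith
    have h3 : a ∣ (y + 1) * b := by
      rw [← Nat.dvd_add_right (Dvd.intro (x + 2) rfl : a ∣ a * (x + 2)), ← h2]
      exact Dvd.intro _ rfl
    have h4 := Nat.le_of_dvd (by omega) (hcop.dvd_of_dvd_mul_right h3)
    have := Nat.mul_le_mul_right b h4
    nlinarith
  · have := Nat.mul_le_mul_right f hz
    omega

/-- Any factorization with no `a` is of Apery form or can be rewritten, with length not
smaller (except for `(a-1) b = f + a`), with an `a`. -/
theorem fr_cases (ha : 3 < a) (hab : a < b) (hf : f + a + b = a * b) (y z : ℕ) :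
    (z = 0 ∧ y + 2 ≤ a) ∨ (z = 1 ∧ y = 0) ∨ (z = 0 ∧ y + 1 = a) ∨
    ∃ x' y' z' : ℕ, y * b + z * f = a + (x' * a + y' * b + z' * f) ∧
      y + z ≤ 1 + x' + y' + z' := by
  obtain ⟨a, rfl⟩ := Nat.exists_eq_add_of_lt ha
  obtain ⟨b, rfl⟩ := Nat.exists_eq_add_of_lt hab
  rcases z with _ | _ | z
  · by_cases h1 : y + 2 ≤ 3 + a + 1
    · left; omega
    by_cases h2 : y + 1 = 3 + a + 1
    · right; right; left; omega
    right; right; right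
    obtain ⟨k, rfl⟩ := Nat.exists_eq_add_of_le (show 3 + a + 1 ≤ y by omega)
    refine ⟨3 + a + b + 1, k, 0, by ring, by omega⟩
  · rcases y with _ | y
    · right; left; omega
    right; right; right
    refine ⟨3 + a + b, y, 0, by nlinarith, by omega⟩
  · right; right; right
    refine ⟨2 + a + b, y + (a + 2), z, by nlinarith, by omega⟩

theorem fr_ne (ha : 3 < a) (hcop : Nat.Coprime a b) (hf : f + a + b = a * b)
    (i : ℕ) (hi : i + 2 ≤ a) (h : i * b = f) : False := by
  have h2 : a * b = a * 1 + (i + 1) * b := by nlinarith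
  have h3 : a ∣ (i + 1) * b := by
    rw [← Nat.dvd_add_right (Dvd.intro 1 rfl : a ∣ a * 1), ← h2]
    exact Dvd.intro _ rfl
  have h4 := Nat.le_of_dvd (by omega) (hcop.dvd_of_dvd_mul_right h3)
  omega

/-- Shape of factorizations of Apery elements. -/
theorem fr_shape (ha : 3 < a) (hab : a < b) (hf : f + a + b = a * b) (x y z t : ℕ)
    (ht : ¬ ∃ w ∈ gen ![a, b, f], t = a + w) (h : t = x * a + y * b + z * f) :
    x = 0 ∧ ((z = 0 ∧ y + 2 ≤ a) ∨ (z = 1 ∧ y = 0)) := by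
  have hx : x = 0 := by
    rcases x with _ | x
    · rfl
    · exact absurd ⟨_, (fr_gen _).2 ⟨x, y, z, rfl⟩, by rw [h]; ring⟩ ht
  refine ⟨hx, ?_⟩
  subst hx
  rcases fr_cases ha hab hf y z with h1 | h1 | ⟨h1, h2⟩ | ⟨x', y', z', h1, -⟩
  · exact Or.inl h1
  · exact Or.inr h1
  · refine absurd ⟨f, (fr_gen _).2 ⟨0, 0, 1, by ring⟩, ?_⟩ ht
    subst h1 h2
    nlinarith
  · exact absurd ⟨_, (fr_gen _).2 ⟨x', y', z', rfl⟩, by omega⟩ ht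

theorem fr_bdd (ha : 0 < a) (hb : 0 < b) (hf : 0 < f) (s : ℕ) :
    BddAbove {l : ℕ | ∃ c : Fin 3 → ℕ, sval ![a, b, f] c = s ∧ tlen c = l} := by
  refine ⟨s, ?_⟩
  rintro l ⟨c, hc, rfl⟩
  rw [fr_sval] at hc
  rw [fr_tlen]
  have h1 := Nat.le_mul_of_pos_right (c 0) ha
  have h2 := Nat.le_mul_of_pos_right (c 1) hb
  have h3 := Nat.le_mul_of_pos_right (c 2) hf
  omega

theorem fr_le (ha : 0 < a) (hb : 0 < b) (hf : 0 < f) (x y z s : ℕ)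
    (h : x * a + y * b + z * f = s) : x + y + z ≤ ordS ![a, b, f] s := by
  apply le_csSup (fr_bdd ha hb hf s)
  exact ⟨![x, y, z], by rw [fr_sval]; simpa using h, by rw [fr_tlen]; simp⟩

theorem fr_ord_le (s m : ℕ) (h : ∀ x y z : ℕ, x * a + y * b + z * f = s → x + y + z ≤ m) :
    ordS ![a, b, f] s ≤ m := by
  apply csSup_le'
  rintro l ⟨c, hc, rfl⟩
  rw [fr_tlen]
  rw [fr_sval] at hc
  exact h _ _ _ hc

theorem fr_tor (ha : 3 < a) (hab : a < b) (hcop : Nat.Coprime a b) (hf : f + a + b = a * b)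
    (hf0 : 0 < f) (s : ℕ) (hs : s ∈ gen ![a, b, f]) (hsf : s ≠ f) (c : ℕ) :
    ∀ x y z : ℕ, x * a + y * b + z * f = s + c * a → x + y + z ≤ ordS ![a, b, f] s + c := by
  induction c with
  | zero =>
    intro x y z h
    exact fr_le (by omega) (by omega) hf0 x y z s (by simpa using h)
  | succ c ih =>
    intro x y z h
    have hcs : (c + 1) * a = c * a + a := by ring
    rcases x with _ | x
    · obtain ⟨p, q, r, hpqr⟩ := (fr_gen s).1 hs
      rcases fr_cases ha hab hf y z with ⟨h1, h2⟩ | ⟨h1, h2⟩ | ⟨h1, h2⟩ | ⟨x', y', z', h1, h2⟩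
      · subst h1
        exact (fr_ap1 ha hab hcop hf y (p + c) q r h2 (by
          rw [hpqr] at h; nlinarith)).elim
      · subst h1 h2
        exact (fr_ap2 ha hcop hf (p + c) q r (by rw [hpqr] at h; nlinarith)).elim
      · subst h1
        have h3 : y * b + b = a * b := by rw [← h2]; ring
        have h4 : f = s + c * a := by omega
        rcases c with _ | c
        · omega
        · exact (fr_ap2 ha hcop hf (p + c) q r (by
            nth_rewrite 1 [h4]; rw [hpqr]; ring)).elim
      · have := ih x' y' z' (by omega)
        omega
    · have h1 : (x + 1) * a = x * a + a := by ring
      have := ih x y z (by omega)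
      omega

end Helpers

/-- for the Frobenius semigroup `H = ⟨a, b, ab - a - b⟩` with
`b > a > 3` coprime: description of `AP(H,a)`, homogeneity of `H`, and
`T(H) = {ab - a - b} ≠ ∅` (so the tangent cone is not Cohen–Macaulay). -/
theorem statement5 (a b : ℕ) (ha : 3 < a) (hab : a < b) (hcop : Nat.Coprime a b)
    (hmin : MinGen ![a, b, a * b - a - b]) :
    Apery ![a, b, a * b - a - b] a =
      {x : ℕ | (∃ i : ℕ, i ≤ a - 2 ∧ x = i * b) ∨ x = a * b - a - b} ∧
    HomogSet ![a, b, a * b - a - b] (Apery ![a, b, a * b - a - b] a) ∧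
    Torsion ![a, b, a * b - a - b] 0 = {a * b - a - b} ∧
    Torsion ![a, b, a * b - a - b] 0 ≠ ∅ := by
  have hf : (a * b - a - b) + a + b = a * b := by
    have : 2 * b ≤ a * b := Nat.mul_le_mul_right b (by omega)
    omega
  have hf0 : 0 < a * b - a - b := by
    have : 4 * b ≤ a * b := Nat.mul_le_mul_right b (by omega)
    omega
  generalize a * b - a - b = f at *
  have hT : Torsion ![a, b, f] 0 = {f} := by
    ext s
    simp only [Torsion, Set.mem_setOf_eq, Set.mem_singleton_iff, Matrix.cons_val_zero]
    constructor
    · rintro ⟨hs, c, hc, h⟩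
      by_contra hsf
      exact absurd (fr_ord_le _ _ (fr_tor ha hab hcop hf hf0 s hs hsf c)) (not_le.mpr h)
    · rintro rfl
      refine ⟨(fr_gen _).2 ⟨0, 0, 1, by ring⟩, 1, one_pos, ?_⟩
      have h1 : ordS ![a, b, s] s ≤ 1 := by
        apply fr_ord_le
        intro x y z h
        have := hmin 2 ![x, y, z] (by rw [fr_sval]; simpa using h.symm)
        rw [fr_tlen] at this
        simp at this
        omega
      have h2 := fr_le (a := a) (b := b) (f := s) (by omega) (by omega) hf0 0 (a - 1) 0
        (s + 1 * a) (by
          obtain ⟨k, rfl⟩ := Nat.exists_eq_add_of_lt ha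
          simp only [Nat.add_sub_cancel]
          nlinarith)
      omega
  refine ⟨?_, ?_, hT, ?_⟩
  · ext t
    simp only [Apery, Set.mem_setOf_eq]
    constructor
    · rintro ⟨ht, hn⟩
      obtain ⟨x, y, z, h⟩ := (fr_gen t).1 ht
      obtain ⟨rfl, ⟨rfl, h2⟩ | ⟨rfl, rfl⟩⟩ := fr_shape ha hab hf x y z t hn h
      · exact Or.inl ⟨y, by omega, by omega⟩
      · exact Or.inr (by omega)
    · rintro (⟨i, hi, rfl⟩ | rfl)
      · refine ⟨(fr_gen _).2 ⟨0, i, 0, by ring⟩, ?_⟩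
        rintro ⟨w, hw, h⟩
        obtain ⟨x, y, z, rfl⟩ := (fr_gen w).1 hw
        exact fr_ap1 ha hab hcop hf i x y z (by omega) h
      · refine ⟨(fr_gen _).2 ⟨0, 0, 1, by ring⟩, ?_⟩
        rintro ⟨w, hw, h⟩
        obtain ⟨x, y, z, rfl⟩ := (fr_gen w).1 hw
        exact fr_ap2 ha hcop hf x y z h
  · rintro t ⟨ht, hn⟩ - c d hc hd
    rw [fr_sval] at hc hd
    rw [fr_tlen, fr_tlen]
    obtain ⟨c0, hc'⟩ := fr_shape ha hab hf _ _ _ t hn hc.symm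
    obtain ⟨d0, hd'⟩ := fr_shape ha hab hf _ _ _ t hn hd.symm
    rw [c0] at hc
    rw [d0] at hd
    rw [c0, d0]
    rcases hc' with ⟨c1, c2⟩ | ⟨c1, c2⟩ <;> rcases hd' with ⟨d1, d2⟩ | ⟨d1, d2⟩ <;>
      rw [c1] at hc <;> rw [d1] at hd
    · have : c 1 * b = d 1 * b := by omega
      have := Nat.eq_of_mul_eq_mul_right (by omega) this
      omega
    · rw [d2] at hd
      exact (fr_ne ha hcop hf _ c2 (by omega)).elim
    · rw [c2] at hc
      exact (fr_ne ha hcop hf _ d2 (by omega)).elim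
    · omega
  · rw [hT]
    exact Set.singleton_ne_empty f
end

section
/- Let S be a numerical semigroup minimally generated by three elements n_1 < n_2 < n_3. If S is not symmetric, then AP(S,n_i) is a homogeneous set for all i = 1,2,3; in particular S is homogeneous. -/
open scoped BigOperators

/-- Membership of an integer in the semigroup generated by `p, q, r`. -/
def mem3 (p q r z : ℤ) : Prop := ∃ a b c : ℤ, 0 ≤ a ∧ 0 ≤ b ∧ 0 ≤ c ∧ z = a * p + b * q + c * r

lemma exists_rep (u v z : ℤ) (hv : 0 < v) (h : IsCoprime u v) :
    ∃ x w : ℤ, 0 ≤ x ∧ x < v ∧ z = x * u + w * v := by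
  obtain ⟨s, t, hst⟩ := h
  refine ⟨(z * s) % v, z * t + (z * s) / v * u, Int.emod_nonneg _ hv.ne', Int.emod_lt_of_pos _ hv, ?_⟩
  have := Int.emod_add_mul_ediv (z * s) v
  have h2 : (z * s) % v = z * s - v * ((z * s) / v) := by linarith
  rw [h2]
  linear_combination (-z) * hst

lemma core (p q r α β : ℤ) (hp : 0 < p) (hq : 0 < q) (hr : 0 < r)
    (hcop : ∀ d : ℤ, d ∣ p → d ∣ q → d ∣ r → IsUnit d)
    (hα : 0 < α) (hαβ : α * q = β * r) (hap : ¬ mem3 p q r (α * q - p)) :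
    ∃ F : ℤ, ∀ z, mem3 p q r z ↔ ¬ mem3 p q r (F - z) := by
  obtain ⟨g, Q, R, hg, hq', hr', hQR⟩ : ∃ g Q R : ℤ, 0 < g ∧ q = g * Q ∧ r = g * R ∧ IsCoprime Q R := by
    have hne : 0 < Int.gcd q r := Int.gcd_pos_of_ne_zero_left _ hq.ne'
    obtain ⟨g', m', n', h1, h2, h3, h4⟩ := Int.exists_gcd_one' (m := q) (n := r) hne
    exact ⟨g', m', n', by exact_mod_cast h1, by rw [h3]; ring, by rw [h4]; ring,
      Int.isCoprime_iff_gcd_eq_one.2 h2⟩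
  have hpg : IsCoprime p g := by
    rw [Int.isCoprime_iff_gcd_eq_one]
    have := hcop (Int.gcd p g) (Int.gcd_dvd_left ..)
      (by rw [hq']; exact Dvd.dvd.mul_right (Int.gcd_dvd_right ..) _)
      (by rw [hr']; exact Dvd.dvd.mul_right (Int.gcd_dvd_right ..) _)
    rw [Int.ofNat_isUnit] at this
    exact Nat.isUnit_iff.1 this
  subst hq' hr'
  have hQ : 0 < Q := pos_of_mul_pos_right hq hg.le
  have hR : 0 < R := pos_of_mul_pos_right hr hg.le
  have hRα : R ≤ α := by
    have h1 : α * Q = β * R := by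
      apply mul_left_cancel₀ hg.ne'
      linear_combination hαβ
    exact Int.le_of_dvd hα (hQR.symm.dvd_of_dvd_mul_right ⟨β, by linarith⟩)
  -- p = y0 Q + w0 R with nonnegative coefficients
  obtain ⟨y0, w0, hy0, hy0R, hp0⟩ := exists_rep Q R p hR hQR
  have hw0 : 0 ≤ w0 := by
    by_contra hneg
    push Not at hneg
    apply hap
    refine ⟨g - 1, α - y0, -w0, by linarith, by linarith, by linarith, ?_⟩
    linear_combination (-g) * hp0
  have key : ∀ x y w : ℤ, 0 ≤ x → x < g → 0 ≤ y → y < R →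
      (mem3 p (g * Q) (g * R) (x * p + y * (g * Q) + w * (g * R)) ↔ 0 ≤ w) := by
    intro x y w hx hxg hy hyR
    constructor
    · rintro ⟨a, b, c, ha, hb, hc, h⟩
      have hd : g ∣ a - x := by
        apply hpg.symm.dvd_of_dvd_mul_right
        exact ⟨y * Q + w * R - b * Q - c * R, by linear_combination -h⟩
      obtain ⟨k, hk⟩ := hd
      have hk0 : 0 ≤ k := by
        by_contra hneg
        have : k ≤ -1 := by omega
        nlinarith
      have h1 : (b + k * y0 - y) * Q = (w - c - k * w0) * R := by
        apply mul_left_cancel₀ hg.ne'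
        linear_combination -h - p * hk - g * k * hp0
      obtain ⟨e, he⟩ : R ∣ b + k * y0 - y :=
        hQR.symm.dvd_of_dvd_mul_right ⟨w - c - k * w0, by linarith⟩
      have hky : 0 ≤ k * y0 := mul_nonneg hk0 hy0
      have he0 : 0 ≤ e := by
        by_contra hneg
        have : e ≤ -1 := by omega
        nlinarith
      have h2 : w = c + k * w0 + Q * e := by
        apply mul_right_cancel₀ hR.ne'
        linear_combination -h1 + Q * he
      rw [h2]; positivity
    · intro hw
      exact ⟨x, y, w, hx, hy, hw, rfl⟩
  refine ⟨(g - 1) * p + (R - 1) * (g * Q) - g * R, fun z => ?_⟩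
  obtain ⟨x, t, hx, hxg, hz⟩ := exists_rep p g z hg hpg
  obtain ⟨y, w, hy, hyR, ht⟩ := exists_rep Q R t hR hQR
  have e1 : z = x * p + y * (g * Q) + w * (g * R) := by rw [hz, ht]; ring
  have e2 : (g - 1) * p + (R - 1) * (g * Q) - g * R - z =
    (g - 1 - x) * p + (R - 1 - y) * (g * Q) + (-1 - w) * (g * R) := by rw [e1]; ring
  rw [e2, key _ _ _ (by omega) (by omega) (by omega) (by omega), e1,
    key _ _ _ hx hxg hy hyR]
  omega

lemma memZ_iff (n : Fin 3 → ℕ) (z : ℤ) : memZ n z ↔ mem3 (n 0) (n 1) (n 2) z := by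
  constructor
  · rintro ⟨x, ⟨a, rfl⟩, rfl⟩
    refine ⟨a 0, a 1, a 2, by positivity, by positivity, by positivity, ?_⟩
    simp [sval, Fin.sum_univ_three]
  · rintro ⟨a, b, c, ha, hb, hc, rfl⟩
    lift a to ℕ using ha
    lift b to ℕ using hb
    lift c to ℕ using hc
    refine ⟨_, ⟨![a, b, c], rfl⟩, ?_⟩
    simp [sval, Fin.sum_univ_three]

lemma sym_of (n : Fin 3 → ℕ)
    (h : ∃ F : ℤ, ∀ z, memZ n z ↔ ¬ memZ n (F - z)) : IsSymmetric n := by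
  obtain ⟨F, hF⟩ := h
  have h0 : memZ n 0 := ⟨0, ⟨0, by simp [sval]⟩, rfl⟩
  refine ⟨F, by simpa using (hF 0).1 h0, fun z hz => ?_, hF⟩
  rw [hF]
  rintro ⟨x, -, hx⟩
  omega

lemma cop_of (n : Fin 3 → ℕ) (hnum : IsNumerical n) (d : ℤ) (h0 : d ∣ n 0) (h1 : d ∣ n 1)
    (h2 : d ∣ n 2) : IsUnit d := by
  obtain ⟨B, hB⟩ := hnum.bddAbove
  have hmem : ∀ x : ℕ, B < x → d ∣ (x : ℤ) := by
    intro x hx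
    have : x ∈ gen n := by
      by_contra hh
      exact absurd (hB hh) (by omega)
    obtain ⟨a, rfl⟩ := this
    simp only [sval, Fin.sum_univ_three]
    push_cast
    exact dvd_add (dvd_add (h0.mul_left _) (h1.mul_left _)) (h2.mul_left _)
  have := dvd_sub (hmem (B + 2) (by omega)) (hmem (B + 1) (by omega))
  push_cast at this
  apply isUnit_of_dvd_one
  convert this using 1
  ring

lemma step (p q r : ℤ) (hp : 0 < p) (hq : 0 < q) (hr : 0 < r)
    (hcop : ∀ d : ℤ, d ∣ p → d ∣ q → d ∣ r → IsUnit d)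
    (hns : ¬ ∃ F : ℤ, ∀ z, mem3 p q r z ↔ ¬ mem3 p q r (F - z))
    (t : ℤ) (ht : ¬ mem3 p q r (t - p)) (a b c a' b' c' : ℤ)
    (ha : 0 ≤ a) (hb : 0 ≤ b) (hc : 0 ≤ c) (ha' : 0 ≤ a') (hb' : 0 ≤ b') (hc' : 0 ≤ c')
    (h : a * p + b * q + c * r = t) (h' : a' * p + b' * q + c' * r = t) :
    a + b + c = a' + b' + c' := by
  have z : ∀ a b c : ℤ, 0 ≤ a → 0 ≤ b → 0 ≤ c → a * p + b * q + c * r = t → a = 0 := by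
    intro a b c ha hb hc h
    by_contra hne
    exact ht ⟨a - 1, b, c, by omega, hb, hc, by linarith⟩
  have e := z a b c ha hb hc h
  have e' := z a' b' c' ha' hb' hc' h'
  subst e e'
  have no : ∀ b c b' c' : ℤ, 0 ≤ b → 0 ≤ c → 0 ≤ b' → 0 ≤ c' →
      0 * p + b * q + c * r = t → 0 * p + b' * q + c' * r = t → ¬ b' < b := by
    intro b c b' c' hb hc hb' hc' h h' hlt
    apply hns
    refine core p q r (b - b') (c' - c) hp hq hr hcop (by omega) (by linarith) ?_
    rintro ⟨x, y, w, hx, hy, hw, he⟩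
    exact ht ⟨x, y + b', w + c, hx, by omega, by omega, by linarith⟩
  have hbb : b = b' := le_antisymm (not_lt.1 (no b c b' c' hb hc hb' hc' h h'))
    (not_lt.1 (no b' c' b c hb' hc' hb hc h' h))
  subst hbb
  have : c = c' := mul_right_cancel₀ hr.ne' (by linarith)
  omega

lemma mem3_rot (p q r z : ℤ) : mem3 q p r z ↔ mem3 p q r z :=
  ⟨fun ⟨a, b, c, ha, hb, hc, h⟩ => ⟨b, a, c, hb, ha, hc, by linarith⟩,
   fun ⟨a, b, c, ha, hb, hc, h⟩ => ⟨b, a, c, hb, ha, hc, by linarith⟩⟩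

lemma mem3_rot2 (p q r z : ℤ) : mem3 r p q z ↔ mem3 p q r z :=
  ⟨fun ⟨a, b, c, ha, hb, hc, h⟩ => ⟨b, c, a, hb, hc, ha, by linarith⟩,
   fun ⟨a, b, c, ha, hb, hc, h⟩ => ⟨c, a, b, hc, ha, hb, by linarith⟩⟩

/-- a non-symmetric numerical semigroup of embedding dimension 3
has all its Apéry sets `AP(S,nᵢ)` homogeneous; in particular it is
homogeneous. -/
theorem statement7 (n : Fin 3 → ℕ) (hmono : StrictMono n) (hpos : 0 < n 0)
    (hnum : IsNumerical n) (hmin : MinGen n) (hnotsym : ¬ IsSymmetric n) :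
    ∀ i : Fin 3, HomogSet n (Apery n (n i)) := by
  have h01 : n 0 < n 1 := hmono (by decide)
  have h12 : n 1 < n 2 := hmono (by decide)
  have p0 : (0 : ℤ) < n 0 := by exact_mod_cast hpos
  have p1 : (0 : ℤ) < n 1 := by omega
  have p2 : (0 : ℤ) < n 2 := by omega
  have hns : ¬ ∃ F : ℤ, ∀ z, mem3 (n 0) (n 1) (n 2) z ↔ ¬ mem3 (n 0) (n 1) (n 2) (F - z) := by
    intro h
    apply hnotsym
    apply sym_of
    simpa only [memZ_iff] using h
  have hcop := cop_of n hnum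
  intro i t ht _ a b ha hb
  have hA : ¬ mem3 (n 0) (n 1) (n 2) ((t : ℤ) - n i) := by
    rw [← memZ_iff]
    rintro ⟨x, hx, hxe⟩
    exact ht.2 ⟨x, hx, by omega⟩
  have ha' : (a 0 * n 0 + a 1 * n 1 + a 2 * n 2 : ℤ) = t := by
    rw [← ha]; simp [sval, Fin.sum_univ_three]
  have hb' : (b 0 * n 0 + b 1 * n 1 + b 2 * n 2 : ℤ) = t := by
    rw [← hb]; simp [sval, Fin.sum_univ_three]
  simp only [tlen, Fin.sum_univ_three]
  zify
  fin_cases i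
  · exact step (n 0) (n 1) (n 2) p0 p1 p2 hcop hns t hA _ _ _ _ _ _ (by positivity)
      (by positivity) (by positivity) (by positivity) (by positivity) (by positivity) ha' hb'
  · have := step (n 1) (n 0) (n 2) p1 p0 p2 (fun d x y z => hcop d y x z)
      (by simpa only [mem3_rot (n 0) (n 1) (n 2)] using hns) t (by rw [mem3_rot (n 0) (n 1) (n 2)]; exact hA)
      (a 1) (a 0) (a 2) (b 1) (b 0) (b 2) (by positivity)
      (by positivity) (by positivity) (by positivity) (by positivity) (by positivity)
      (by linarith) (by linarith)
    linarith
  · have := step (n 2) (n 0) (n 1) p2 p0 p1 (fun d x y z => hcop d y z x)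
      (by simpa only [mem3_rot2 (n 0) (n 1) (n 2)] using hns) t (by rw [mem3_rot2 (n 0) (n 1) (n 2)]; exact hA)
      (a 2) (a 0) (a 1) (b 2) (b 0) (b 1) (by positivity)
      (by positivity) (by positivity) (by positivity) (by positivity) (by positivity)
      (by linarith) (by linarith)
    linarith
end

section
/- Let S be a numerical semigroup minimally generated by four elements n_1 < n_2 < n_3 < n_4, and for each j let c_j be the least positive integer such that c_j·n_j lies in the submonoid of ℕ generated by {n_l : l ≠ j}. The following are equivalent: (1) S is homogeneous; (2) the set {c_2·n_2, c_3·n_3, c_4·n_4} ∩ AP(S,n_1) is homogeneous; (3) c_2·n_2 ∉ AP(S,n_1), c_4·n_4 ∉ AP(S,n_1), and if c_3·n_3 ∈ AP(S,n_1) then all factorizations of c_3·n_3 have the same length. -/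
open scoped BigOperators

theorem sval4 (n a : Fin 4 → ℕ) :
    sval n a = a 0 * n 0 + a 1 * n 1 + a 2 * n 2 + a 3 * n 3 := by
  simp [sval, Fin.sum_univ_four]

theorem tlen4 (a : Fin 4 → ℕ) : tlen a = a 0 + a 1 + a 2 + a 3 := by
  simp [tlen, Fin.sum_univ_four]

theorem gen_sval (n a : Fin 4 → ℕ) : sval n a ∈ gen n := ⟨a, rfl⟩

theorem gen_add {n : Fin 4 → ℕ} {x y : ℕ} (hx : x ∈ gen n) (hy : y ∈ gen n) :
    x + y ∈ gen n := by
  obtain ⟨a, rfl⟩ := hx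
  obtain ⟨b, rfl⟩ := hy
  refine ⟨fun i => a i + b i, ?_⟩
  simp only [sval4]
  ring

theorem gen_comb (n : Fin 4 → ℕ) (x y z : ℕ) : x * n 1 + y * n 2 + z * n 3 ∈ gen n :=
  ⟨![0, x, y, z], by simp [sval4]⟩

theorem apery_down {n : Fin 4 → ℕ} {s x y : ℕ} (h : x + y ∈ Apery n s)
    (hx : x ∈ gen n) (hy : y ∈ gen n) : x ∈ Apery n s := by
  refine ⟨hx, ?_⟩
  rintro ⟨z, hz, rfl⟩
  exact h.2 ⟨z + y, gen_add hz hy, by ring⟩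

theorem apery_zero {n a : Fin 4 → ℕ} (h : sval n a ∈ Apery n (n 0)) : a 0 = 0 := by
  by_contra h0
  obtain ⟨k, hk⟩ := Nat.exists_eq_succ_of_ne_zero h0
  refine h.2 ⟨k * n 0 + a 1 * n 1 + a 2 * n 2 + a 3 * n 3, ⟨![k, a 1, a 2, a 3], ?_⟩, ?_⟩
  · simp [sval4]
  · rw [sval4, hk, Nat.succ_eq_add_one]
    ring

theorem apery_le {n : Fin 4 → ℕ} {x y z x' y' z' : ℕ}
    (h : x * n 1 + y * n 2 + z * n 3 ∈ Apery n (n 0))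
    (hx : x' ≤ x) (hy : y' ≤ y) (hz : z' ≤ z) :
    x' * n 1 + y' * n 2 + z' * n 3 ∈ Apery n (n 0) := by
  obtain ⟨u, rfl⟩ := Nat.exists_eq_add_of_le hx
  obtain ⟨v, rfl⟩ := Nat.exists_eq_add_of_le hy
  obtain ⟨w, rfl⟩ := Nat.exists_eq_add_of_le hz
  refine apery_down (y := u * n 1 + v * n 2 + w * n 3) ?_ (gen_comb _ _ _ _) (gen_comb _ _ _ _)
  convert h using 1
  ring

theorem pure_mem {n : Fin 4 → ℕ} {c A : ℕ} {l : Fin 4} (h : A * n l ∈ Apery n (n 0))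
    (hcA : c ≤ A) : c * n l ∈ Apery n (n 0) := by
  obtain ⟨u, rfl⟩ := Nat.exists_eq_add_of_le hcA
  have hg : ∀ k, k * n l ∈ gen n := fun k => ⟨Pi.single l k, by simp [sval, Pi.single_apply]⟩
  rw [Nat.add_mul] at h
  exact apery_down h (hg _) (hg _)

theorem key_two {n : Fin 4 → ℕ} (p1 : 0 < n 1) (p3 : 0 < n 3) {c p q : ℕ} (hcpos : 0 < c)
    (hrel : c * n 2 = p * n 1 + q * n 3) (hlen : c = p + q)
    (h1 : ∀ A B C, 0 < A → A * n 1 = B * n 2 + C * n 3 → A * n 1 ∉ Apery n (n 0))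
    (h3 : ∀ A B C, 0 < A → A * n 3 = B * n 1 + C * n 2 → A * n 3 ∉ Apery n (n 0))
    (h2 : ∀ A B C, 0 < A → A * n 2 = B * n 1 + C * n 3 → c ≤ A) :
    ∀ A B C, A * n 2 = B * n 1 + C * n 3 → A * n 2 ∈ Apery n (n 0) → A = B + C := by
  intro A
  induction A using Nat.strong_induction_on with
  | _ A ih =>
  intro B C h hA
  rcases Nat.eq_zero_or_pos A with rfl | hApos
  · have hB : B * n 1 = 0 := by omega
    have hC : C * n 3 = 0 := by omega
    have hB' := (Nat.mul_eq_zero.1 hB).resolve_right p1.ne'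
    have hC' := (Nat.mul_eq_zero.1 hC).resolve_right p3.ne'
    omega
  obtain ⟨A', rfl⟩ := Nat.exists_eq_add_of_le (h2 A B C hApos h)
  have hA' : B * n 1 + 0 * n 2 + C * n 3 ∈ Apery n (n 0) := by
    convert hA using 1
    omega
  rcases Nat.lt_or_ge B p with hB | hB
  · obtain ⟨b, rfl⟩ := Nat.exists_eq_add_of_lt hB
    rcases Nat.le_or_ge C q with hC | hC
    · obtain ⟨e, rfl⟩ := Nat.exists_eq_add_of_le hC
      exfalso
      have : A' * n 2 + (b + 1) * n 1 + e * n 3 = 0 := by linarith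
      have : 0 < (b + 1) * n 1 := by positivity
      omega
    · obtain ⟨e, rfl⟩ := Nat.exists_eq_add_of_le hC
      exfalso
      have he : e * n 3 = (b + 1) * n 1 + A' * n 2 := by linarith
      have hpos : 0 < (b + 1) * n 1 := by positivity
      have he0 : 0 < e := by
        rcases Nat.eq_zero_or_pos e with rfl | h'
        · omega
        · exact h'
      refine h3 e _ _ he0 he ?_
      simpa using apery_le hA' (Nat.zero_le _) (Nat.zero_le _) (Nat.le_add_left e q)
  · obtain ⟨b, rfl⟩ := Nat.exists_eq_add_of_le hB
    rcases Nat.lt_or_ge C q with hC | hC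
    · obtain ⟨e, rfl⟩ := Nat.exists_eq_add_of_lt hC
      exfalso
      have he : b * n 1 = A' * n 2 + (e + 1) * n 3 := by linarith
      have hpos : 0 < (e + 1) * n 3 := by positivity
      have he0 : 0 < b := by
        rcases Nat.eq_zero_or_pos b with rfl | h'
        · omega
        · exact h'
      refine h1 b _ _ he0 he ?_
      simpa using apery_le hA' (Nat.le_add_left b p) (Nat.zero_le _) (Nat.zero_le _)
    · obtain ⟨e, rfl⟩ := Nat.exists_eq_add_of_le hC
      have := ih A' (by omega) b e (by linarith) (pure_mem hA (Nat.le_add_left _ _))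
      omega

/-- Two factorizations in the Apery set have the same length, given the pure-power facts. -/
theorem len_le {n : Fin 4 → ℕ} (p1 : 0 < n 1) (p2 : 0 < n 2) (p3 : 0 < n 3)
    (h1 : ∀ A B C, 0 < A → A * n 1 = B * n 2 + C * n 3 → A * n 1 ∉ Apery n (n 0))
    (h3 : ∀ A B C, 0 < A → A * n 3 = B * n 1 + C * n 2 → A * n 3 ∉ Apery n (n 0))
    (h2 : ∀ A B C, A * n 2 = B * n 1 + C * n 3 → A * n 2 ∈ Apery n (n 0) → A = B + C)
    {x y z x' y' z' : ℕ} (h : x * n 1 + y * n 2 + z * n 3 ∈ Apery n (n 0))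
    (he : x * n 1 + y * n 2 + z * n 3 = x' * n 1 + y' * n 2 + z' * n 3) :
    x + y + z = x' + y' + z' := by
  have h' := he ▸ h
  have z1 : ∀ A B C, A * n 1 = B * n 2 + C * n 3 → A * n 1 ∈ Apery n (n 0) →
      A = 0 ∧ B = 0 ∧ C = 0 := by
    intro A B C e m
    rcases Nat.eq_zero_or_pos A with rfl | hA
    · have hB : B * n 2 = 0 := by omega
      have hC : C * n 3 = 0 := by omega
      exact ⟨rfl, (Nat.mul_eq_zero.1 hB).resolve_right p2.ne',
        (Nat.mul_eq_zero.1 hC).resolve_right p3.ne'⟩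
    · exact absurd m (h1 A B C hA e)
  have z3 : ∀ A B C, A * n 3 = B * n 1 + C * n 2 → A * n 3 ∈ Apery n (n 0) →
      A = 0 ∧ B = 0 ∧ C = 0 := by
    intro A B C e m
    rcases Nat.eq_zero_or_pos A with rfl | hA
    · have hB : B * n 1 = 0 := by omega
      have hC : C * n 2 = 0 := by omega
      exact ⟨rfl, (Nat.mul_eq_zero.1 hB).resolve_right p1.ne',
        (Nat.mul_eq_zero.1 hC).resolve_right p2.ne'⟩
    · exact absurd m (h3 A B C hA e)
  have zz : ∀ A B C, A * n 1 + B * n 2 + C * n 3 = 0 → A = 0 ∧ B = 0 ∧ C = 0 := by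
    intro A B C e
    have hA : A * n 1 = 0 := by omega
    have hB : B * n 2 = 0 := by omega
    have hC : C * n 3 = 0 := by omega
    exact ⟨(Nat.mul_eq_zero.1 hA).resolve_right p1.ne',
      (Nat.mul_eq_zero.1 hB).resolve_right p2.ne', (Nat.mul_eq_zero.1 hC).resolve_right p3.ne'⟩
  have m1 : ∀ u, u ≤ x ∨ u ≤ x' → u * n 1 ∈ Apery n (n 0) := by
    rintro u (hu | hu)
    · simpa using apery_le h hu (Nat.zero_le _) (Nat.zero_le _)
    · simpa using apery_le h' hu (Nat.zero_le _) (Nat.zero_le _)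
  have m2 : ∀ u, u ≤ y ∨ u ≤ y' → u * n 2 ∈ Apery n (n 0) := by
    rintro u (hu | hu)
    · simpa using apery_le h (Nat.zero_le _) hu (Nat.zero_le _)
    · simpa using apery_le h' (Nat.zero_le _) hu (Nat.zero_le _)
  have m3 : ∀ u, u ≤ z ∨ u ≤ z' → u * n 3 ∈ Apery n (n 0) := by
    rintro u (hu | hu)
    · simpa using apery_le h (Nat.zero_le _) (Nat.zero_le _) hu
    · simpa using apery_le h' (Nat.zero_le _) (Nat.zero_le _) hu
  clear h h'
  rcases Nat.le_total x x' with hx | hx <;> rcases Nat.le_total y y' with hy | hy <;>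
    rcases Nat.le_total z z' with hz | hz <;>
    obtain ⟨u, rfl⟩ := Nat.exists_eq_add_of_le hx <;>
    obtain ⟨v, rfl⟩ := Nat.exists_eq_add_of_le hy <;>
    obtain ⟨w, rfl⟩ := Nat.exists_eq_add_of_le hz
  · have := zz u v w (by linarith)
    omega
  · have := z3 w u v (by linarith) (m3 _ (by omega))
    omega
  · have := h2 v u w (by linarith) (m2 _ (by omega))
    omega
  · have := z1 u v w (by linarith) (m1 _ (by omega))
    omega
  · have := z1 u v w (by linarith) (m1 _ (by omega))
    omega
  · have := h2 v u w (by linarith) (m2 _ (by omega))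
    omega
  · have := z3 w u v (by linarith) (m3 _ (by omega))
    omega
  · have := zz u v w (by linarith)
    omega

/-- in embedding dimension 4, `S` is homogeneous iff
`{c₂n₂, c₃n₃, c₄n₄} ∩ AP(S,n₁)` is homogeneous, iff `c₂n₂, c₄n₄ ∉ AP(S,n₁)`
and, when `c₃n₃ ∈ AP(S,n₁)`, all factorizations of `c₃n₃` have the same
length. -/
theorem statement9 (n : Fin 4 → ℕ) (hmono : StrictMono n) (hpos : 0 < n 0)
    (hnum : IsNumerical n) (hmin : MinGen n)
    (c : Fin 4 → ℕ)
    (hc : ∀ l : Fin 4, 0 < c l ∧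
      (∃ a : Fin 4 → ℕ, a l = 0 ∧ c l * n l = sval n a) ∧
      (∀ c' : ℕ, 0 < c' → (∃ a : Fin 4 → ℕ, a l = 0 ∧ c' * n l = sval n a) →
        c l ≤ c')) :
    (HomogSet n (Apery n (n 0)) ↔
      HomogSet n (({c 1 * n 1, c 2 * n 2, c 3 * n 3} : Set ℕ) ∩
        Apery n (n 0))) ∧
    (HomogSet n (Apery n (n 0)) ↔
      (c 1 * n 1 ∉ Apery n (n 0) ∧ c 3 * n 3 ∉ Apery n (n 0) ∧
        (c 2 * n 2 ∈ Apery n (n 0) →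
          ∀ a b : Fin 4 → ℕ, sval n a = c 2 * n 2 → sval n b = c 2 * n 2 →
            tlen a = tlen b))) := by
  have l01 : n 0 < n 1 := hmono (by decide)
  have l12 : n 1 < n 2 := hmono (by decide)
  have l23 : n 2 < n 3 := hmono (by decide)
  have p1 : 0 < n 1 := by omega
  have p2 : 0 < n 2 := by omega
  have p3 : 0 < n 3 := by omega
  have pureS : ∀ (l : Fin 4) (k : ℕ), sval n (Pi.single l k) = k * n l := by
    intro l k
    simp [sval, Pi.single_apply]
  have pureT : ∀ (l : Fin 4) (k : ℕ), tlen (Pi.single l k : Fin 4 → ℕ) = k := by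
    intro l k
    simp [tlen]
  have h12 : HomogSet n (Apery n (n 0)) →
      HomogSet n (({c 1 * n 1, c 2 * n 2, c 3 * n 3} : Set ℕ) ∩ Apery n (n 0)) :=
    fun h t ht => h t ht.2
  have h23 : HomogSet n (({c 1 * n 1, c 2 * n 2, c 3 * n 3} : Set ℕ) ∩ Apery n (n 0)) →
      (c 1 * n 1 ∉ Apery n (n 0) ∧ c 3 * n 3 ∉ Apery n (n 0) ∧
        (c 2 * n 2 ∈ Apery n (n 0) →
          ∀ a b : Fin 4 → ℕ, sval n a = c 2 * n 2 → sval n b = c 2 * n 2 →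
            tlen a = tlen b)) := by
    intro h
    refine ⟨?_, ?_, ?_⟩
    · intro hm
      obtain ⟨hp, ⟨a, ha, hs⟩, -⟩ := hc 1
      have hne : c 1 * n 1 ≠ 0 := (Nat.mul_pos hp p1).ne'
      have ht := h _ ⟨by simp, hm⟩ hne (Pi.single 1 (c 1)) a (pureS _ _) hs.symm
      have h0 : a 0 = 0 := apery_zero (hs ▸ hm)
      rw [pureT, tlen4, h0, ha] at ht
      rw [sval4, h0, ha, ht] at hs
      have : 0 < a 2 + a 3 := by omega
      nlinarith
    · intro hm
      obtain ⟨hp, ⟨a, ha, hs⟩, -⟩ := hc 3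
      have hne : c 3 * n 3 ≠ 0 := (Nat.mul_pos hp p3).ne'
      have ht := h _ ⟨by simp, hm⟩ hne (Pi.single 3 (c 3)) a (pureS _ _) hs.symm
      have h0 : a 0 = 0 := apery_zero (hs ▸ hm)
      rw [pureT, tlen4, h0, ha] at ht
      rw [sval4, h0, ha, ht] at hs
      have : 0 < a 1 + a 2 := by omega
      nlinarith
    · intro hm
      exact h _ ⟨by simp, hm⟩ (Nat.mul_pos (hc 2).1 p2).ne'
  have h31 : (c 1 * n 1 ∉ Apery n (n 0) ∧ c 3 * n 3 ∉ Apery n (n 0) ∧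
        (c 2 * n 2 ∈ Apery n (n 0) →
          ∀ a b : Fin 4 → ℕ, sval n a = c 2 * n 2 → sval n b = c 2 * n 2 →
            tlen a = tlen b)) → HomogSet n (Apery n (n 0)) := by
    rintro ⟨k1, k3, k2⟩
    have h1 : ∀ A B C, 0 < A → A * n 1 = B * n 2 + C * n 3 → A * n 1 ∉ Apery n (n 0) := by
      intro A B C hA e hm
      exact k1 (pure_mem hm ((hc 1).2.2 A hA ⟨![0, 0, B, C], by simp, by simp [sval4, e]⟩))
    have h3 : ∀ A B C, 0 < A → A * n 3 = B * n 1 + C * n 2 → A * n 3 ∉ Apery n (n 0) := by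
      intro A B C hA e hm
      exact k3 (pure_mem hm ((hc 3).2.2 A hA ⟨![0, B, C, 0], by simp, by simp [sval4, e]⟩))
    have h2 : ∀ A B C, 0 < A → A * n 2 = B * n 1 + C * n 3 → c 2 ≤ A := by
      intro A B C hA e
      exact (hc 2).2.2 A hA ⟨![0, B, 0, C], by simp, by simp [sval4, e]⟩
    have h2' : ∀ A B C, A * n 2 = B * n 1 + C * n 3 → A * n 2 ∈ Apery n (n 0) → A = B + C := by
      by_cases hm : c 2 * n 2 ∈ Apery n (n 0)
      · obtain ⟨hp, ⟨a, ha, hs⟩, -⟩ := hc 2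
        have h0 : a 0 = 0 := apery_zero (hs ▸ hm)
        have ht := k2 hm (Pi.single 2 (c 2)) a (pureS _ _) hs.symm
        rw [pureT, tlen4, h0, ha] at ht
        rw [sval4, h0, ha] at hs
        exact key_two p1 p3 hp (p := a 1) (q := a 3) (by omega) (by omega) h1 h3 h2
      · intro A B C e m
        rcases Nat.eq_zero_or_pos A with rfl | hA
        · have hB : B * n 1 = 0 := by omega
          have hC : C * n 3 = 0 := by omega
          have hB' := (Nat.mul_eq_zero.1 hB).resolve_right p1.ne'
          have hC' := (Nat.mul_eq_zero.1 hC).resolve_right p3.ne'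
          omega
        · exact absurd (pure_mem m (h2 A B C hA e)) hm
    intro t ht _ a b ha hb
    have ha0 : a 0 = 0 := apery_zero (ha ▸ ht)
    have hb0 : b 0 = 0 := apery_zero (hb ▸ ht)
    rw [sval4, ha0] at ha
    rw [sval4, hb0] at hb
    have e1 : a 1 * n 1 + a 2 * n 2 + a 3 * n 3 = t := by omega
    have := len_le p1 p2 p3 h1 h3 h2' (e1 ▸ ht)
      (show _ = b 1 * n 1 + b 2 * n 2 + b 3 * n 3 by omega)
    rw [tlen4, tlen4, ha0, hb0]
    omega
  exact ⟨⟨h12, fun h => h31 (h23 h)⟩, ⟨fun h => h23 (h12 h), h31⟩⟩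
end
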